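/- Let X be a uniformly convex real Banach space, let r be a Helly sequence for X, and let k ≥ 1. Let P be a finite set of n points contained in the closed unit ball of X. Then there exists a point x ∈ X such that every closed half-space H⁺ = {y ∈ X : f(y) ≥ c} (with f a nonzero continuous linear functional on X and c ∈ ℝ) which contains the closed ball of radius r_k centered at x contains at least n/k points of P. -/

import Mathlib

open scoped Classical

noncomputable section

/-- `y` is quasi-orthogonal to `x`: some nonzero continuous linear functional attains
its norm on `x` and vanishes on `y`. -/
def QuasiOrth {X : Type*} [NormedAddCommGroup X] [NormedSpace ℝ X] (y x : X) : Prop :=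
  ∃ f : X →L[ℝ] ℝ, f ≠ 0 ∧ f x = ‖f‖ * ‖x‖ ∧ f y = 0

/-- `ζ_X(ε) = inf {‖x + ε y‖ : ‖x‖ = ‖y‖ = 1, y ⌐ x}`. -/
def zetaConv (X : Type*) [NormedAddCommGroup X] [NormedSpace ℝ X] (ε : ℝ) : ℝ :=
  sInf {t : ℝ | ∃ x y : X, ‖x‖ = 1 ∧ ‖y‖ = 1 ∧ QuasiOrth y x ∧ t = ‖x + ε • y‖}

/-- `ζ⁺_X(ε) = sup {‖x + ε y‖ : ‖x‖ = ‖y‖ = 1, y ⌐ x}`. -/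
def zetaSmooth (X : Type*) [NormedAddCommGroup X] [NormedSpace ℝ X] (ε : ℝ) : ℝ :=
  sSup {t : ℝ | ∃ x y : X, ‖x‖ = 1 ∧ ‖y‖ = 1 ∧ QuasiOrth y x ∧ t = ‖x + ε • y‖}

/-- The modulus of convexity `δ_X(ε)`. -/
def modConv (X : Type*) [NormedAddCommGroup X] [NormedSpace ℝ X] (ε : ℝ) : ℝ :=
  sInf {t : ℝ | ∃ x y : X, ‖x‖ ≤ 1 ∧ ‖y‖ ≤ 1 ∧ ε ≤ ‖x - y‖ ∧ t = 1 - ‖x + y‖ / 2}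

/-- The modulus of smoothness `ρ_X(τ)`. -/
def modSmooth (X : Type*) [NormedAddCommGroup X] [NormedSpace ℝ X] (τ : ℝ) : ℝ :=
  sSup {t : ℝ | ∃ x y : X, ‖x‖ = 1 ∧ ‖y‖ = τ ∧ t = (‖x + y‖ + ‖x - y‖) / 2 - 1}

/-- `X` is uniformly convex: the modulus of convexity is positive on `(0, 2]`. -/
def UnifConvex (X : Type*) [NormedAddCommGroup X] [NormedSpace ℝ X] : Prop :=
  ∀ ε ∈ Set.Ioc (0 : ℝ) 2, 0 < modConv X ε

/-- `X` is uniformly smooth: `ρ_X(τ)/τ → 0` as `τ → 0⁺`. -/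
def UnifSmooth (X : Type*) [NormedAddCommGroup X] [NormedSpace ℝ X] : Prop :=
  Filter.Tendsto (fun τ => modSmooth X τ / τ) (nhdsWithin 0 (Set.Ioi 0)) (nhds 0)

/-- A Helly sequence for `X`: `r : {1,2,…} → (0,1]` with `r 1 = 1` and
`r (j+1) * ζ_X (r (j+1)) = r j` for all `j ≥ 1`. -/
def IsHellySeq (X : Type*) [NormedAddCommGroup X] [NormedSpace ℝ X] (r : ℕ → ℝ) : Prop :=
  (∀ j : ℕ, 1 ≤ j → r j ∈ Set.Ioc (0 : ℝ) 1) ∧ r 1 = 1 ∧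
    ∀ j : ℕ, 1 ≤ j → r (j + 1) * zetaConv X (r (j + 1)) = r j

end

/-!
Call `x` bad if some `R ⊆ P` with fewer than `n / k` points can be deleted so that the convex hull
of the rest is at distance more than `r k` from `x`. Suppose that every `x` is bad. Delete such a
set for `x = 0`; then repeatedly let `q` be the point of the remaining hull nearest to `0`, and
delete such a set for `x = q`. A hyperplane supports the remaining hull at `q`, so every `p` in the
new hull is `q + w` with `w` long and on the far side of that hyperplane, whence
`‖q‖ * ζ_X(ε) ≤ ‖p‖` for `ε ≤ ‖w‖ / ‖q‖`. The recursion defining `r` turns this into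
`r k < r j * ‖p‖` for all `p` in the hull left after `j` deletions. After `k` deletions a point of
`P` remains, and its norm exceeds `1`.
-/

section

variable {X : Type*} [NormedAddCommGroup X] [NormedSpace ℝ X] {x y : X} {ε : ℝ}

namespace QuasiOrth

lemma smul (h : QuasiOrth y x) (b : ℝ) {a : ℝ} (ha : 0 ≤ a) :
    QuasiOrth (b • y) (a • x) := by
  obtain ⟨f, hf, hfx, hfy⟩ := h
  refine ⟨f, hf, ?_, by simp [hfy]⟩
  rw [map_smul, hfx, norm_smul_of_nonneg ha, smul_eq_mul]
  ring

lemma norm_le_norm_add_smul (h : QuasiOrth y x) (t : ℝ) : ‖x‖ ≤ ‖x + t • y‖ := by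
  obtain ⟨f, hf, hfx, hfy⟩ := h
  refine le_of_mul_le_mul_left ?_ (norm_pos_iff.2 hf)
  calc ‖f‖ * ‖x‖ = f (x + t • y) := by simp [hfx, hfy]
    _ ≤ ‖f‖ * ‖x + t • y‖ := (le_abs_self _).trans (f.le_opNorm _)

lemma monotoneOn_norm_add_smul (h : QuasiOrth y x) :
    MonotoneOn (fun t : ℝ => ‖x + t • y‖) (Set.Ici 0) := by
  intro s (hs : 0 ≤ s) t _ hst
  have hconv : ConvexOn ℝ Set.univ (fun t : ℝ => ‖x + t • y‖) := by
    simpa [Function.comp_def, AffineMap.lineMap_apply, add_comm] using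
      (convexOn_univ_norm (E := X)).comp_affineMap (AffineMap.lineMap x (x + y))
  have hseg : s ∈ segment ℝ 0 t := by
    rw [segment_eq_Icc (hs.trans hst)]
    exact ⟨hs, hst⟩
  refine (hconv.le_max_of_mem_segment trivial trivial hseg).trans (max_le ?_ le_rfl)
  simpa using h.norm_le_norm_add_smul t

lemma norm_add_smul_le_norm_add (h : QuasiOrth y x) (hε : 0 ≤ ε) {a b : ℝ} (ha : 0 ≤ a)
    (hb : 0 ≤ b) (hw : ε * ‖y‖ ≤ ‖a • x + b • y‖) :
    ‖x + ε • y‖ ≤ ‖x + (a • x + b • y)‖ := by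
  obtain ⟨c, hc, rfl⟩ : ∃ c, 0 ≤ c ∧ (1 + a) * c = b :=
    ⟨b / (1 + a), by positivity, by field_simp⟩
  have hsum : ‖x + (a • x + ((1 + a) * c) • y)‖ = (1 + a) * ‖x + c • y‖ := by
    rw [← norm_smul_of_nonneg (by positivity)]
    congr 1
    module
  rw [hsum]
  -- For `c ≤ ε`, the multiples of `‖y‖` cancel in the sum of two triangle inequalities through
  -- multiples of `x + c • y`.
  rcases le_total ε c with hεc | hcε
  · calc ‖x + ε • y‖ ≤ ‖x + c • y‖ := h.monotoneOn_norm_add_smul hε hc hεc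
      _ ≤ (1 + a) * ‖x + c • y‖ := le_mul_of_one_le_left (norm_nonneg _) (by linarith)
  · have hleft : ‖x + ε • y‖ ≤ ‖x + c • y‖ + (ε - c) * ‖y‖ :=
      calc ‖x + ε • y‖ = ‖(x + c • y) + (ε - c) • y‖ := by congr 1; module
        _ ≤ ‖x + c • y‖ + ‖(ε - c) • y‖ := norm_add_le _ _
        _ = ‖x + c • y‖ + (ε - c) * ‖y‖ := by rw [norm_smul_of_nonneg (sub_nonneg.2 hcε)]
    have hright : ‖a • x + ((1 + a) * c) • y‖ ≤ a * ‖x + c • y‖ + c * ‖y‖ :=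
      calc ‖a • x + ((1 + a) * c) • y‖ = ‖a • (x + c • y) + c • y‖ := by congr 1; module
        _ ≤ ‖a • (x + c • y)‖ + ‖c • y‖ := norm_add_le _ _
        _ = a * ‖x + c • y‖ + c * ‖y‖ := by
          rw [norm_smul_of_nonneg ha, norm_smul_of_nonneg hc]
    linarith

lemma norm_mul_zetaConv_le (h : QuasiOrth y x) (hxy : ‖y‖ = ‖x‖) (ε : ℝ) :
    ‖x‖ * zetaConv X ε ≤ ‖x + ε • y‖ := by
  rcases eq_or_ne x 0 with rfl | hx
  · simp
  have hx' : 0 < ‖x‖ := norm_pos_iff.2 hx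
  have hbdd : BddBelow {t : ℝ | ∃ x y : X, ‖x‖ = 1 ∧ ‖y‖ = 1 ∧ QuasiOrth y x ∧
      t = ‖x + ε • y‖} := by
    refine ⟨0, ?_⟩
    rintro _ ⟨x, y, -, -, -, rfl⟩
    exact norm_nonneg _
  rw [← le_inv_mul_iff₀ hx', ← norm_smul_of_nonneg (inv_nonneg.2 hx'.le), smul_add,
    smul_comm]
  refine csInf_le hbdd ⟨‖x‖⁻¹ • x, ‖x‖⁻¹ • y, norm_smul_inv_norm hx, ?_,
    h.smul _ (inv_nonneg.2 hx'.le), rfl⟩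
  rw [norm_smul, norm_inv, norm_norm, hxy, inv_mul_cancel₀ hx'.ne']

end QuasiOrth

lemma zetaConv_le_one_add (hε : 0 ≤ ε) : zetaConv X ε ≤ 1 + ε := by
  by_cases h : ∃ x y : X, ‖x‖ = 1 ∧ ‖y‖ = 1 ∧ QuasiOrth y x
  · obtain ⟨x, y, hx, hy, hyx⟩ := h
    calc zetaConv X ε ≤ ‖x + ε • y‖ := by
          simpa [hx] using hyx.norm_mul_zetaConv_le (hy.trans hx.symm) ε
      _ ≤ ‖x‖ + ‖ε • y‖ := norm_add_le _ _
      _ = 1 + ε := by rw [norm_smul_of_nonneg hε, hx, hy, mul_one]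
  · -- In dimension at most one the infimum is over the empty set, hence `0`.
    have hzero : zetaConv X ε = 0 := by
      rw [zetaConv, ← Real.sInf_empty]
      congr 1
      exact Set.eq_empty_of_forall_notMem fun _ ⟨x, y, hx, hy, hyx, _⟩ => h ⟨x, y, hx, hy, hyx⟩
    linarith

lemma norm_mul_zetaConv_le_norm_add {w : X} {f : X →L[ℝ] ℝ} (hf : f ≠ 0)
    (hfx : f x = ‖f‖ * ‖x‖) (hfw : 0 ≤ f w) (hε : 0 ≤ ε) (hw : ε * ‖x‖ ≤ ‖w‖) :
    ‖x‖ * zetaConv X ε ≤ ‖x + w‖ := by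
  rcases eq_or_ne x 0 with rfl | hx
  · simp
  have hx' : 0 < ‖x‖ := norm_pos_iff.2 hx
  have hfx' : 0 < f x := hfx ▸ mul_pos (norm_pos_iff.2 hf) hx'
  obtain ⟨a, v, ha, hfv, rfl⟩ : ∃ (a : ℝ) (v : X), 0 ≤ a ∧ f v = 0 ∧ w = a • x + v :=
    ⟨f w / f x, w - (f w / f x) • x, by positivity, by simp [hfx'.ne'], by simp⟩
  rcases eq_or_ne v 0 with rfl | hv
  · have hεa : ε ≤ a := by
      rw [add_zero, norm_smul_of_nonneg ha] at hw
      exact le_of_mul_le_mul_right hw hx'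
    calc ‖x‖ * zetaConv X ε ≤ ‖x‖ * (1 + a) := by
          gcongr
          exact (zetaConv_le_one_add hε).trans (by linarith)
      _ = ‖(1 + a) • x‖ := by rw [norm_smul_of_nonneg (by positivity), mul_comm]
      _ = ‖x + (a • x + 0)‖ := by rw [add_zero, add_smul, one_smul]
  · have hv' : 0 < ‖v‖ := norm_pos_iff.2 hv
    obtain ⟨b, y, hb, hy, rfl⟩ : ∃ (b : ℝ) (y : X), 0 ≤ b ∧ ‖y‖ = ‖x‖ ∧ v = b • y := by
      refine ⟨‖v‖ / ‖x‖, (‖x‖ / ‖v‖) • v, by positivity, ?_, ?_⟩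
      · rw [norm_smul_of_nonneg (by positivity), div_mul_cancel₀ _ hv'.ne']
      · rw [smul_smul, div_mul_div_cancel₀ hx'.ne', div_self hv'.ne', one_smul]
    have hb0 : b ≠ 0 := fun hb0 => hv (by rw [hb0, zero_smul])
    have hyx : QuasiOrth y x := ⟨f, hf, hfx, by simpa [hb0] using hfv⟩
    exact (hyx.norm_mul_zetaConv_le hy ε).trans
      (hyx.norm_add_smul_le_norm_add hε ha hb (hy ▸ hw))

lemma opNorm_mul_le_of_forall_ball_le {f : X →L[ℝ] ℝ} {s u : ℝ} (hs : 0 < s)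
    (h : ∀ z ∈ Metric.ball (0 : X) s, f z ≤ u) : ‖f‖ * s ≤ u := by
  by_contra! hlt
  obtain ⟨z, hz, hfz⟩ := f.exists_lt_apply_of_lt_opNorm ((div_lt_iff₀ hs).2 hlt)
  have hsz : ‖s • z‖ < s := by
    rw [norm_smul_of_nonneg hs.le]
    exact mul_lt_of_lt_one_right hs hz
  have hpos := h (s • z) (by simpa using hsz)
  have hneg := h (-(s • z)) (by simpa using hsz)
  rw [map_neg, map_smul, smul_eq_mul] at hneg
  rw [map_smul, smul_eq_mul] at hpos
  rw [div_lt_iff₀' hs, ← norm_smul_of_nonneg hs.le] at hfz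
  exact hfz.not_ge (abs_le.2 ⟨neg_le.1 hneg, hpos⟩)

variable {C : Set X} {p q : X}

lemma exists_supporting_functional_of_isMinOn_norm (hC : Convex ℝ C) (hq : q ∈ C)
    (hmin : IsMinOn norm C q) (hq0 : q ≠ 0) :
    ∃ f : X →L[ℝ] ℝ, f ≠ 0 ∧ f q = ‖f‖ * ‖q‖ ∧ ∀ p ∈ C, f q ≤ f p := by
  have hq' : 0 < ‖q‖ := norm_pos_iff.2 hq0
  have hdisj : Disjoint (Metric.ball 0 ‖q‖) C := Set.disjoint_left.2 fun z hz hzC =>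
    (mem_ball_zero_iff.1 hz).not_ge (hmin hzC)
  obtain ⟨f, u, hfu, huf⟩ :=
    geometric_hahn_banach_open (convex_ball 0 ‖q‖) Metric.isOpen_ball hC hdisj
  have hnorm : ‖f‖ * ‖q‖ ≤ u :=
    opNorm_mul_le_of_forall_ball_le hq' fun z hz => (hfu z hz).le
  have hfq : f q ≤ ‖f‖ * ‖q‖ := (le_abs_self _).trans (f.le_opNorm q)
  refine ⟨f, ?_, hfq.antisymm (hnorm.trans (huf q hq)), fun p hp => ?_⟩
  · rintro rfl
    have hu : 0 < u := hfu 0 (Metric.mem_ball_self hq')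
    exact hu.not_ge (huf q hq)
  · exact hfq.trans (hnorm.trans (huf p hp))

lemma norm_mul_zetaConv_le_norm_of_isMinOn_norm (hC : Convex ℝ C) (hq : q ∈ C)
    (hmin : IsMinOn norm C q) (hp : p ∈ C) (hε : 0 ≤ ε) (hpq : ε * ‖q‖ ≤ ‖p - q‖) :
    ‖q‖ * zetaConv X ε ≤ ‖p‖ := by
  rcases eq_or_ne q 0 with rfl | hq0
  · simp
  obtain ⟨f, hf, hfq, hfC⟩ := exists_supporting_functional_of_isMinOn_norm hC hq hmin hq0
  have hfw : 0 ≤ f (p - q) := by simpa using hfC p hp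
  simpa using norm_mul_zetaConv_le_norm_add hf hfq hfw hε hpq

lemma lt_mul_norm_of_isMinOn_norm (hC : Convex ℝ C) (hq : q ∈ C) (hmin : IsMinOn norm C q)
    (hp : p ∈ C) (hε : 0 ≤ ε) {ρ : ℝ} (hρ : ρ < ε * zetaConv X ε * ‖q‖) (hpq : ρ < ‖p - q‖) :
    ρ < ε * ‖p‖ := by
  rcases lt_or_ge ρ (ε * ‖q‖) with hlt | hge
  · exact hlt.trans_le (mul_le_mul_of_nonneg_left (hmin hp) hε)
  · have hζ : ‖q‖ * zetaConv X ε ≤ ‖p‖ :=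
      norm_mul_zetaConv_le_norm_of_isMinOn_norm hC hq hmin hp hε (hge.trans hpq.le)
    calc ρ < ε * (‖q‖ * zetaConv X ε) := by rwa [mul_comm ‖q‖, ← mul_assoc]
      _ ≤ ε * ‖p‖ := mul_le_mul_of_nonneg_left hζ hε

lemma lt_dist_of_closedBall_subset_halfSpace {f : X →L[ℝ] ℝ} {c ρ : ℝ} {s : Set X}
    (hball : Metric.closedBall x ρ ⊆ {y | c ≤ f y}) (hs : ∀ p ∈ s, f p < c)
    (hq : q ∈ convexHull ℝ s) : ρ < dist q x := by
  have hqc : f q < c := convexHull_min hs (convex_halfSpace_lt f.toLinearMap.isLinear c) hq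
  by_contra! hle
  exact hqc.not_ge (hball hle)

variable {r : ℕ → ℝ}

lemma IsHellySeq.exists_card_lt_forall_lt_mul_norm (hr : IsHellySeq X r) {P : Set X}
    (hP : P.Finite) {m ρ : ℝ}
    (hbad : ∀ x, ∃ R : Finset X, (R.card : ℝ) < m ∧ ∀ q ∈ convexHull ℝ (P \ R), ρ < dist q x)
    {j : ℕ} (hj : 1 ≤ j) :
    ∃ R : Finset X, (R.card : ℝ) < j * m ∧ ∀ q ∈ convexHull ℝ (P \ R), ρ < r j * ‖q‖ := by
  obtain ⟨hr_mem, hr_one, hr_succ⟩ := hr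
  induction j, hj using Nat.le_induction with
  | base => simpa [hr_one] using hbad 0
  | succ j hj ih =>
    obtain ⟨R, hRcard, hR⟩ := ih
    rcases (P \ R : Set X).eq_empty_or_nonempty with hempty | hne
    · have hm : 0 < m := by
        obtain ⟨R', hR'card, -⟩ := hbad 0
        exact (Nat.cast_nonneg _).trans_lt hR'card
      refine ⟨R, ?_, by simp [hempty]⟩
      push_cast
      linarith
    obtain ⟨q, hq, hqmin⟩ := (hP.sdiff.isCompact_convexHull ℝ).exists_isMinOn
      hne.convexHull continuous_norm.continuousOn
    obtain ⟨R', hR'card, hR'⟩ := hbad q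
    have hcard : ((R ∪ R').card : ℝ) ≤ R.card + R'.card := by
      exact_mod_cast Finset.card_union_le R R'
    refine ⟨R ∪ R', ?_, fun p hp => ?_⟩
    · push_cast
      linarith
    have hpR : p ∈ convexHull ℝ (P \ R) :=
      convexHull_mono (Set.sdiff_subset_sdiff_right (by simp)) hp
    have hpR' : p ∈ convexHull ℝ (P \ R') :=
      convexHull_mono (Set.sdiff_subset_sdiff_right (by simp)) hp
    refine lt_mul_norm_of_isMinOn_norm (convex_convexHull ℝ _) hq hqmin hpR
      (hr_mem (j + 1) (by omega)).1.le ?_ (dist_eq_norm p q ▸ hR' p hpR')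
    rw [hr_succ j hj]
    exact hR q hq

theorem IsHellySeq.exists_forall_convexHull_sdiff_dist_le (hr : IsHellySeq X r) {k : ℕ}
    (hk : 1 ≤ k) (P : Finset X) (hP : ∀ p ∈ P, ‖p‖ ≤ 1) :
    ∃ x : X, ∀ R : Finset X, (R.card : ℝ) < P.card / k →
      ∃ q ∈ convexHull ℝ (P \ R : Set X), dist q x ≤ r k := by
  by_contra! hbad
  obtain ⟨R, hRcard, hR⟩ := hr.exists_card_lt_forall_lt_mul_norm P.finite_toSet hbad hk
  have hcard : R.card < P.card := by
    rw [mul_div_cancel₀ _ (by positivity)] at hRcard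
    exact_mod_cast hRcard
  obtain ⟨p, hpP, hpR⟩ := Finset.exists_mem_notMem_of_card_lt_card hcard
  have hlt : r k < r k * ‖p‖ := hR p (subset_convexHull ℝ _ ⟨hpP, hpR⟩)
  exact hlt.not_ge (mul_le_of_le_one_right (hr.1 k hk).1.le (hP p hpP))

theorem no_dim_centerpoint_general (hr : IsHellySeq X r) {k : ℕ} (hk : 1 ≤ k) (P : Finset X)
    (hP : ∀ p ∈ P, p ∈ Metric.closedBall (0 : X) 1) :
    ∃ x : X, ∀ (f : X →L[ℝ] ℝ) (c : ℝ), Metric.closedBall x (r k) ⊆ {y : X | c ≤ f y} →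
      (P.card : ℝ) / k ≤ (P.filter (fun p => c ≤ f p)).card := by
  obtain ⟨x, hx⟩ := hr.exists_forall_convexHull_sdiff_dist_le hk P (by simpa using hP)
  refine ⟨x, fun f c hball => ?_⟩
  by_contra! hcard
  obtain ⟨q, hq, hqx⟩ := hx _ hcard
  have hs : ∀ p ∈ (P \ P.filter (fun p => c ≤ f p) : Set X), f p < c := by
    rintro p ⟨hpP, hpc⟩
    simpa [Finset.mem_coe.1 hpP] using hpc
  exact hqx.not_gt (lt_dist_of_closedBall_subset_halfSpace hball hs hq)

end

/-- **No-dimensional centerpoint theorem in uniformly convex Banach spaces.** -/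
theorem no_dim_centerpoint
    {X : Type*} [NormedAddCommGroup X] [NormedSpace ℝ X] [CompleteSpace X]
    (hX : UnifConvex X) {r : ℕ → ℝ} (hr : IsHellySeq X r)
    {k : ℕ} (hk1 : 1 ≤ k)
    {n : ℕ} (P : Finset X) (hPcard : P.card = n)
    (hP : ∀ p ∈ P, p ∈ Metric.closedBall (0 : X) 1) :
    ∃ x : X, ∀ f : X →L[ℝ] ℝ, f ≠ 0 → ∀ c : ℝ,
      Metric.closedBall x (r k) ⊆ {y : X | c ≤ f y} →
      (n : ℝ) / k ≤ (P.filter (fun p => c ≤ f p)).card := by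
  obtain ⟨x, hx⟩ := no_dim_centerpoint_general hr hk1 P hP
  exact ⟨x, fun f _ c hball => hPcard ▸ hx f c hball⟩
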